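/- arXiv:2405.15407 — 2 statements merged into one kernel-verified Lean document; each statement's English description precedes it below -/
import Mathlib

section
/- Let E be a real inner product space, let F, f : E → ℝ be differentiable, let u, v ∈ E, and let ρ, γ, ε, L, V₂, D > 0 be reals. Define J(x) = f(x) + (ρ/2)‖x − u‖² and 𝕁(x) = F(x) + (ρ/2)‖x − u‖². Assume: (i) the gradient of 𝕁 is L-Lipschitz; (ii) ‖∇J(v)‖² ≤ V₂; (iii) ‖v − u‖² ≤ D²·γ²·V₂; (iv) ⟪∇𝕁(v), ∇J(v)⟫ ≥ ε·‖∇F(v)‖². Then F(v − γ•∇J(v)) ≤ F(v) − γ·ε·‖∇F(v)‖² + (L·γ²/2)·V₂ + (ρ·D²·γ²/2)·V₂. -/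
/-!
The regularized objective `Jc` has an `L`-Lipschitz gradient, so the descent lemma
(`descent_of_lipschitz_gradient`) bounds `Jc (v - γ • ∇J v)` by
`Jc v - γ ⟪∇Jc v, ∇J v⟫ + (L / 2) γ² ‖∇J v‖²`. Passing from `Jc` back to `F`, the proximal term
at the new point is nonnegative and is dropped, while the one at `v` is `(ρ / 2) ‖v - u‖²`,
controlled by the drift bound. The inner product is bounded below by `ε ‖∇F v‖²` by assumption.
-/

open RealInnerProductSpace

/-- Descent lemma: the quadratic upper bound for a function with `L`-Lipschitz gradient. Along the
segment, `t ↦ h (x + t d) - t ⟪∇h x, d⟫ - (L / 2) t² ‖d‖²` has nonpositive derivative for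
`t ≥ 0` by Cauchy-Schwarz, so its value at `1` is at most its value at `0`. -/
theorem descent_of_lipschitz_gradient
    {E : Type*} [NormedAddCommGroup E] [InnerProductSpace ℝ E] [CompleteSpace E]
    {h : E → ℝ} (hh : Differentiable ℝ h) {L : ℝ} (hL : 0 ≤ L)
    (hlip : LipschitzWith L.toNNReal (gradient h)) (x d : E) :
    h (x + d) ≤ h x + ⟪gradient h x, d⟫ + L / 2 * ‖d‖ ^ 2 := by
  have hder : ∀ t : ℝ, HasDerivAt
      (fun t : ℝ => h (x + t • d) - t * ⟪gradient h x, d⟫ - L / 2 * t ^ 2 * ‖d‖ ^ 2)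
      (⟪gradient h (x + t • d), d⟫ - ⟪gradient h x, d⟫ - L * t * ‖d‖ ^ 2) t := by
    intro t
    have hline : HasDerivAt (fun t : ℝ => x + t • d) d t := by
      simpa using ((hasDerivAt_id t).smul_const d).const_add x
    have hcomp : HasDerivAt (fun t : ℝ => h (x + t • d)) ⟪gradient h (x + t • d), d⟫ t := by
      exact (hh (x + t • d)).hasGradientAt.hasFDerivAt.comp_hasDerivAt t hline
    have hlin : HasDerivAt (fun t : ℝ => t * ⟪gradient h x, d⟫) ⟪gradient h x, d⟫ t := by
      simpa using (hasDerivAt_id t).mul_const ⟪gradient h x, d⟫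
    have hquad : HasDerivAt (fun t : ℝ => L / 2 * t ^ 2 * ‖d‖ ^ 2) (L * t * ‖d‖ ^ 2) t := by
      refine (((hasDerivAt_pow 2 t).const_mul (L / 2)).mul_const (‖d‖ ^ 2)).congr_deriv ?_
      push_cast
      ring
    exact (hcomp.sub hlin).sub hquad
  have hanti := antitoneOn_of_deriv_nonpos (convex_Icc (0 : ℝ) 1)
    (fun t _ => (hder t).continuousAt.continuousWithinAt)
    (fun t _ => (hder t).differentiableAt.differentiableWithinAt)
    (by
      intro t ht
      rw [interior_Icc] at ht
      rw [(hder t).deriv, ← inner_sub_left]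
      have hcs := real_inner_le_norm (gradient h (x + t • d) - gradient h x) d
      have hl := hlip.norm_sub_le (x + t • d) x
      rw [Real.coe_toNNReal L hL, add_sub_cancel_left, norm_smul, Real.norm_of_nonneg ht.1.le] at hl
      have := mul_le_mul_of_nonneg_right hl (norm_nonneg d)
      linarith)
  have h01 := hanti (Set.left_mem_Icc.2 zero_le_one) (Set.right_mem_Icc.2 zero_le_one) zero_le_one
  simp only [one_smul, zero_smul, add_zero] at h01
  linarith

/-- Deterministic per-local-step descent inequality (equation iteration1):
one proximal gradient step on the client objective `J` decreases the cluster
objective `F` up to error terms. -/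
theorem per_step_descent
    {E : Type*} [NormedAddCommGroup E] [InnerProductSpace ℝ E] [CompleteSpace E]
    (F f : E → ℝ) (hF : Differentiable ℝ F) (hf : Differentiable ℝ f)
    (u v : E) (ρ γ ε L V₂ D : ℝ)
    (hρ : 0 < ρ) (hγ : 0 < γ) (hε : 0 < ε) (hL : 0 < L) (hV₂ : 0 < V₂) (hD : 0 < D)
    (J Jc : E → ℝ)
    (hJ : ∀ x : E, J x = f x + (ρ / 2) * ‖x - u‖ ^ 2)
    (hJc : ∀ x : E, Jc x = F x + (ρ / 2) * ‖x - u‖ ^ 2)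
    (hlip : LipschitzWith L.toNNReal (gradient Jc))
    (hgradJ : ‖gradient J v‖ ^ 2 ≤ V₂)
    (hvu : ‖v - u‖ ^ 2 ≤ D ^ 2 * γ ^ 2 * V₂)
    (hip : ⟪gradient Jc v, gradient J v⟫ ≥ ε * ‖gradient F v‖ ^ 2) :
    F (v - γ • gradient J v) ≤
      F v - γ * ε * ‖gradient F v‖ ^ 2 + (L * γ ^ 2 / 2) * V₂
        + (ρ * D ^ 2 * γ ^ 2 / 2) * V₂ := by
  have hJcd : Differentiable ℝ Jc := by
    rw [funext hJc]
    exact hF.add (((differentiable_id.sub_const u).norm_sq ℝ).const_mul (ρ / 2))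
  have hdesc := descent_of_lipschitz_gradient hJcd hL.le hlip v (-(γ • gradient J v))
  rw [← sub_eq_add_neg, hJc, hJc, inner_neg_right, real_inner_smul_right, norm_neg, norm_smul,
    mul_pow, Real.norm_of_nonneg hγ.le] at hdesc
  have hprox : 0 ≤ ρ / 2 * ‖v - γ • gradient J v - u‖ ^ 2 := by positivity
  have hdrift := mul_le_mul_of_nonneg_left hvu (half_pos hρ).le
  have hinner := mul_le_mul_of_nonneg_left hip hγ.le
  have hquad := mul_le_mul_of_nonneg_left hgradJ (show 0 ≤ L * γ ^ 2 / 2 by positivity)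
  linarith
end

section
/- Let E be a real inner product space, let F, f : E → ℝ be differentiable, let u ∈ E, let ρ, γ, ε, L, V₂ > 0 be reals, and let H, H_max be natural numbers with 1 ≤ H ≤ H_max. Define J(x) = f(x) + (ρ/2)‖x − u‖² and 𝕁(x) = F(x) + (ρ/2)‖x − u‖², and the iterates v 0 = u, v (h+1) = v h − γ•∇J(v h) for h < H. Assume: (i) the gradient of 𝕁 is L-Lipschitz; (ii) ‖∇J(x)‖² ≤ V₂ for all x ∈ E; (iii) ⟪∇𝕁(v h), ∇J(v h)⟫ ≥ ε·‖∇F(v h)‖² for all h < H. Then F(v H) − F(u) ≤ −γ·ε·Σ_{h=0}^{H−1}‖∇F(v h)‖² + (H_max·L·γ²/2)·V₂ + (ρ·H_max³·γ²/2)·V₂. -/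
/-!
Since `Jc = F + (ρ/2)‖· - u‖²` agrees with `F` at `u` and dominates `F` everywhere,
`F (v H) - F u ≤ Jc (v H) - Jc (v 0)`. The descent lemma (`descent_lemma`) for the `L`-smooth
function `Jc` bounds each increment by
`-γ ⟪∇Jc (v h), ∇J (v h)⟫ + (L γ² / 2) ‖∇J (v h)‖² ≤ -γ ε ‖∇F (v h)‖² + (L γ² / 2) V₂`,
and summing over `h < H ≤ Hmax` gives the claim; the last error term is only needed to be
nonnegative.
-/

open RealInnerProductSpace

/-- Descent lemma: a differentiable function with `L`-Lipschitz gradient lies below its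
quadratic upper model at every point. -/
theorem descent_lemma
    {E : Type*} [NormedAddCommGroup E] [InnerProductSpace ℝ E] [CompleteSpace E]
    {G : E → ℝ} (hG : Differentiable ℝ G) {L : ℝ} (hL : 0 ≤ L)
    (hlip : LipschitzWith L.toNNReal (gradient G)) (x d : E) :
    G (x + d) ≤ G x + ⟪gradient G x, d⟫ + L / 2 * ‖d‖ ^ 2 := by
  -- The gap between `G` and its model along the segment from `x` to `x + d` is nonincreasing.
  let g : ℝ → ℝ := fun t => G (x + t • d) - t * ⟪gradient G x, d⟫ - L / 2 * ‖d‖ ^ 2 * t ^ 2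
  have hg : ∀ t, HasDerivAt g
      (⟪gradient G (x + t • d), d⟫ - ⟪gradient G x, d⟫ - L * ‖d‖ ^ 2 * t) t := by
    intro t
    have h1 : HasDerivAt (fun t : ℝ => x + t • d) d t := by
      simpa using ((hasDerivAt_id t).smul_const d).const_add x
    have h2 := (hG (x + t • d)).hasGradientAt.hasFDerivAt.comp_hasDerivAt t h1
    rw [InnerProductSpace.toDual_apply_apply] at h2
    have h3 := (h2.sub ((hasDerivAt_id t).mul_const ⟪gradient G x, d⟫)).sub
      (((hasDerivAt_id t).pow 2).const_mul (L / 2 * ‖d‖ ^ 2))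
    refine h3.congr_deriv ?_
    simp
    ring
  have hanti : AntitoneOn g (Set.Icc 0 1) := by
    refine antitoneOn_of_deriv_nonpos (convex_Icc 0 1)
      (fun t _ => (hg t).continuousAt.continuousWithinAt)
      (fun t _ => (hg t).differentiableAt.differentiableWithinAt) ?_
    intro t ht
    rw [interior_Icc] at ht
    rw [(hg t).deriv, ← inner_sub_left]
    have h1 := real_inner_le_norm (gradient G (x + t • d) - gradient G x) d
    have h2 := hlip.norm_sub_le (x + t • d) x
    rw [Real.coe_toNNReal L hL, add_sub_cancel_left, norm_smul, Real.norm_eq_abs,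
      abs_of_pos ht.1] at h2
    have h3 := mul_le_mul_of_nonneg_right h2 (norm_nonneg d)
    nlinarith
  have h01 := hanti (Set.left_mem_Icc.2 zero_le_one) (Set.right_mem_Icc.2 zero_le_one) zero_le_one
  simp only [g, one_smul, zero_smul, add_zero] at h01
  linarith

/-- Telescoped local-training bound (equation compo1): after `H` local proximal
gradient steps starting from `u`, the cluster objective `F` decreases by the
accumulated squared gradient norms up to error terms. -/
theorem local_training_bound
    {E : Type*} [NormedAddCommGroup E] [InnerProductSpace ℝ E] [CompleteSpace E]
    (F f : E → ℝ) (hF : Differentiable ℝ F) (hf : Differentiable ℝ f)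
    (u : E) (ρ γ ε L V₂ : ℝ)
    (hρ : 0 < ρ) (hγ : 0 < γ) (hε : 0 < ε) (hL : 0 < L) (hV₂ : 0 < V₂)
    (H Hmax : ℕ) (hH1 : 1 ≤ H) (hHmax : H ≤ Hmax)
    (J Jc : E → ℝ)
    (hJ : ∀ x : E, J x = f x + (ρ / 2) * ‖x - u‖ ^ 2)
    (hJc : ∀ x : E, Jc x = F x + (ρ / 2) * ‖x - u‖ ^ 2)
    (v : ℕ → E) (hv0 : v 0 = u)
    (hstep : ∀ h < H, v (h + 1) = v h - γ • gradient J (v h))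
    (hlip : LipschitzWith L.toNNReal (gradient Jc))
    (hgradJ : ∀ x : E, ‖gradient J x‖ ^ 2 ≤ V₂)
    (hip : ∀ h < H, ⟪gradient Jc (v h), gradient J (v h)⟫ ≥ ε * ‖gradient F (v h)‖ ^ 2) :
    F (v H) - F u ≤
      -(γ * ε) * ∑ h ∈ Finset.range H, ‖gradient F (v h)‖ ^ 2
        + ((Hmax : ℝ) * L * γ ^ 2 / 2) * V₂
        + (ρ * (Hmax : ℝ) ^ 3 * γ ^ 2 / 2) * V₂ := by
  have hJcd : Differentiable ℝ Jc := by
    rw [funext hJc]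
    exact hF.add (((differentiable_id.sub_const u).norm_sq ℝ).const_mul _)
  have hone : ∀ h < H, Jc (v (h + 1)) - Jc (v h) ≤
      -(γ * ε) * ‖gradient F (v h)‖ ^ 2 + L * γ ^ 2 / 2 * V₂ := by
    intro h hh
    have h1 := descent_lemma hJcd hL.le hlip (v h) (-(γ • gradient J (v h)))
    rw [← sub_eq_add_neg, ← hstep h hh, inner_neg_right, inner_smul_right, norm_neg, norm_smul,
      mul_pow, Real.norm_eq_abs, sq_abs] at h1
    have h2 := mul_le_mul_of_nonneg_left (hip h hh) hγ.le
    have h3 := mul_le_mul_of_nonneg_left (hgradJ (v h))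
      (by positivity : 0 ≤ L * γ ^ 2 / 2)
    linarith
  have hsum : Jc (v H) - Jc (v 0) ≤
      -(γ * ε) * ∑ h ∈ Finset.range H, ‖gradient F (v h)‖ ^ 2 + H * (L * γ ^ 2 / 2 * V₂) := by
    have h := Finset.sum_le_sum fun h hh => hone h (Finset.mem_range.1 hh)
    rw [Finset.sum_range_sub (fun h => Jc (v h)), Finset.sum_add_distrib, ← Finset.mul_sum] at h
    simpa using h
  rw [hv0, hJc, hJc u, sub_self, norm_zero] at hsum
  have hprox : 0 ≤ ρ / 2 * ‖v H - u‖ ^ 2 := by positivity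
  have hHH : (H : ℝ) * (L * γ ^ 2 / 2 * V₂) ≤ Hmax * (L * γ ^ 2 / 2 * V₂) := by gcongr
  have hlast : 0 ≤ (ρ * (Hmax : ℝ) ^ 3 * γ ^ 2 / 2) * V₂ := by positivity
  linarith
end
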